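/- Let Q be a regular two-sided cell of a fiat category C and let F and G be elements of Q. Then there exists H in Q with F ~_L H and H ~_R G, and there exists K in Q with F ~_R K and K ~_L G. Equivalently, on Q the full relation Q x Q equals the composite of the restricted relations ~_R and ~_L taken in either order. -/

import Mathlib

open CategoryTheory CategoryTheory.Limits

universe w v u

attribute [local instance] CategoryTheory.Limits.hasBinaryBiproducts_of_finite_biproducts

namespace CellTwoRep

variable {C : Type u} [Bicategory.{w, v} C]

/-- `G` is a retract (direct summand) of `F` in a hom-category of the bicategory `C`. -/
def IsSummand {a b : C} (G F : a ⟶ b) : Prop :=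
  ∃ (ι : G ⟶ F) (π : F ⟶ G), ι ≫ π = 𝟙 G

/-- Cast a 1-morphism along equalities of objects. -/
def castHom {a a' b b' : C} (h₁ : a = a') (h₂ : b = b') (f : a ⟶ b) : a' ⟶ b' :=
  h₁ ▸ h₂ ▸ f

section Indec

variable [∀ a b : C, Preadditive (a ⟶ b)] [∀ a b : C, HasFiniteBiproducts (a ⟶ b)]

/-- An indecomposable 1-morphism: nonzero, and any decomposition as a biproduct is trivial. -/
def Indec {a b : C} (F : a ⟶ b) : Prop :=
  ¬ IsZero F ∧ ∀ G H : a ⟶ b, Nonempty (F ≅ G ⊞ H) → IsZero G ∨ IsZero H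

end Indec

/-- A 1-morphism of `C` together with its endpoints. -/
structure OneMor (C : Type u) [Bicategory.{w, v} C] where
  src : C
  tgt : C
  mor : src ⟶ tgt

/-- right preorder: `F ≤_R G` iff `G` is a direct summand of `H ∘ F` for some `H`. -/
def leR (F G : OneMor C) : Prop :=
  ∃ (h : F.src = G.src) (H : F.tgt ⟶ G.tgt),
    IsSummand G.mor (castHom h rfl F.mor ≫ H)

/-- left preorder: `F ≤_L G` iff `G` is a direct summand of `F ∘ H` for some `H`. -/
def leL (F G : OneMor C) : Prop :=
  ∃ (h : F.tgt = G.tgt) (H : G.src ⟶ F.src),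
    IsSummand G.mor (H ≫ castHom rfl h F.mor)

/-- two-sided preorder: `F ≤_LR G` iff `G` is a direct summand of `H₂ ∘ F ∘ H₁`. -/
def leLR (F G : OneMor C) : Prop :=
  ∃ (H₁ : G.src ⟶ F.src) (H₂ : F.tgt ⟶ G.tgt),
    IsSummand G.mor (H₁ ≫ F.mor ≫ H₂)

def simR (F G : OneMor C) : Prop := leR F G ∧ leR G F
def simL (F G : OneMor C) : Prop := leL F G ∧ leL G F
def simLR (F G : OneMor C) : Prop := leLR F G ∧ leLR G F

/-- Isomorphism of 1-morphisms (with possibly different, but equal, endpoints). -/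
def IsoM (F G : OneMor C) : Prop :=
  ∃ (h₁ : F.src = G.src) (h₂ : F.tgt = G.tgt), Nonempty (castHom h₁ h₂ F.mor ≅ G.mor)

section Cells

variable [∀ a b : C, Preadditive (a ⟶ b)] [∀ a b : C, HasFiniteBiproducts (a ⟶ b)]

def IndecM (F : OneMor C) : Prop := Indec F.mor

/-- A right cell: the `∼_R`-equivalence class of some indecomposable 1-morphism. -/
def IsRightCell (R : Set (OneMor C)) : Prop :=
  ∃ F : OneMor C, IndecM F ∧ R = {G | IndecM G ∧ simR F G}

def IsLeftCell (L : Set (OneMor C)) : Prop :=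
  ∃ F : OneMor C, IndecM F ∧ L = {G | IndecM G ∧ simL F G}

def IsTwoSidedCell (Q : Set (OneMor C)) : Prop :=
  ∃ F : OneMor C, IndecM F ∧ Q = {G | IndecM G ∧ simLR F G}

/-- The right order on cells. -/
def cellLeR (R R' : Set (OneMor C)) : Prop := ∃ F ∈ R, ∃ G ∈ R', leR F G

/-- The left order on cells. -/
def cellLeL (L L' : Set (OneMor C)) : Prop := ∃ F ∈ L, ∃ G ∈ L', leL F G

/-- A regular two-sided cell: distinct right cells inside it are incomparable for `≤_R`. -/
def IsRegular (Q : Set (OneMor C)) : Prop :=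
  IsTwoSidedCell Q ∧ ∀ R R' : Set (OneMor C), IsRightCell R → IsRightCell R' →
    R ⊆ Q → R' ⊆ Q → R ≠ R' → ¬ cellLeR R R' ∧ ¬ cellLeR R' R

/-- A strongly regular two-sided cell: regular, and every left cell meets every right cell
inside it in exactly one isomorphism class. -/
def IsStronglyRegular (Q : Set (OneMor C)) : Prop :=
  IsRegular Q ∧ ∀ L R : Set (OneMor C), IsLeftCell L → IsRightCell R → L ⊆ Q → R ⊆ Q →
    ∃ F, F ∈ L ∩ R ∧ ∀ G, G ∈ L ∩ R → IsoM F G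

end Cells

/-- All the axioms of a fiat (`k`-finitary with involution and adjunctions) 2-category,
on top of a strict bicategory whose hom-categories are additive and `k`-linear. -/
structure FiatAxioms (k : Type*) [Field k] [IsAlgClosed k]
    (C : Type u) [Bicategory.{w, v} C] [Bicategory.Strict C]
    [∀ a b : C, Preadditive (a ⟶ b)] [∀ a b : C, HasFiniteBiproducts (a ⟶ b)]
    [∀ a b : C, Linear k (a ⟶ b)] : Type (max u v w) where
  /-- finitely many objects -/
  finObj : Finite C
  /-- each hom-category is idempotent complete -/
  idemComplete : ∀ a b : C, IsIdempotentComplete (a ⟶ b)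
  /-- finite-dimensional spaces of 2-morphisms -/
  finDim : ∀ (a b : C) (f g : a ⟶ b), FiniteDimensional k (f ⟶ g)
  /-- finitely many isomorphism classes of indecomposable 1-morphisms -/
  finIndec : ∀ a b : C, ∃ (n : ℕ) (ι : Fin n → (a ⟶ b)),
      ∀ F : a ⟶ b, Indec F → ∃ i, Nonempty (F ≅ ι i)
  /-- each identity 1-morphism is indecomposable -/
  idIndec : ∀ a : C, Indec (𝟙 a)
  /-- horizontal composition is additive in the second variable -/
  whiskerLeft_add : ∀ {a b c : C} (f : a ⟶ b) {g h : b ⟶ c} (η θ : g ⟶ h),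
      Bicategory.whiskerLeft f (η + θ) =
        Bicategory.whiskerLeft f η + Bicategory.whiskerLeft f θ
  /-- horizontal composition is additive in the first variable -/
  whiskerRight_add : ∀ {a b c : C} {f g : a ⟶ b} (η θ : f ⟶ g) (h : b ⟶ c),
      Bicategory.whiskerRight (η + θ) h =
        Bicategory.whiskerRight η h + Bicategory.whiskerRight θ h
  /-- the involution on 1-morphisms -/
  star : ∀ {a b : C}, (a ⟶ b) → (b ⟶ a)
  /-- the involution on 2-morphisms -/
  star2 : ∀ {a b : C} {f g : a ⟶ b}, (f ⟶ g) → (star f ⟶ star g)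
  star2_id : ∀ {a b : C} (f : a ⟶ b), star2 (𝟙 f) = 𝟙 (star f)
  star2_comp : ∀ {a b : C} {f g h : a ⟶ b} (η : f ⟶ g) (θ : g ⟶ h),
      star2 (η ≫ θ) = star2 η ≫ star2 θ
  /-- the involution is a weak anti-homomorphism -/
  starComp : ∀ {a b c : C} (f : a ⟶ b) (g : b ⟶ c),
      Nonempty (star (f ≫ g) ≅ star g ≫ star f)
  starId : ∀ a : C, Nonempty (star (𝟙 a) ≅ 𝟙 a)
  /-- the involution is weakly involutive -/
  starStar : ∀ {a b : C} (f : a ⟶ b), Nonempty (star (star f) ≅ f)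
  /-- adjunctions: every 1-morphism `f` is left adjoint to `star f` -/
  adj : ∀ {a b : C} (f : a ⟶ b), Nonempty (Bicategory.Adjunction f (star f))

/-!
Two elements `F`, `G` of a two-sided cell satisfy `F ≤_LR G`, so `G` is a summand of `H₂ ∘ F ∘ H₁`.
Endomorphism rings are Artinian, hence those of indecomposables are local, and a primitive
idempotent of `End (H₂ ∘ F)` can be chosen that still acts invertibly on `G`. Its image is an
indecomposable summand `K` of `H₂ ∘ F` such that `G` is a summand of `K ∘ H₁`. Then `F ≤_R K ≤_L G`,
which places `K` in the cell, and regularity turns `F ≤_R K` into `F ∼_R K`. Taking right adjoints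
preserves the cell and exchanges `≤_L` with `≤_R`, so regularity also turns `K ≤_L G` into
`K ∼_L G`. For the other order of composition, exchange `F` and `G`.
-/

open Bicategory

section Rings

/-- A primitive idempotent: a nonzero idempotent `e` whose corner `e * A * e` contains no
idempotents other than `0` and `e`. Membership of `d` in the corner is encoded as
`e * d = d` and `d * e = d`. -/
def IsPrimitiveIdempotent {A : Type*} [MulZeroClass A] (e : A) : Prop :=
  e ≠ 0 ∧ IsIdempotentElem e ∧ ∀ d, IsIdempotentElem d → e * d = d → d * e = d → d = 0 ∨ d = e

lemma isPrimitiveIdempotent_one_iff {A : Type*} [MonoidWithZero A] :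
    IsPrimitiveIdempotent (1 : A) ↔ Nontrivial A ∧ ∀ d : A, IsIdempotentElem d → d = 0 ∨ d = 1 := by
  simp [IsPrimitiveIdempotent, IsIdempotentElem.one, ne_eq,
    ← not_subsingleton_iff_nontrivial, subsingleton_iff_zero_eq_one, eq_comm]

lemma IsPrimitiveIdempotent.one_of_mulEquiv_op {A B : Type*} [MonoidWithZero A] [MonoidWithZero B]
    (φ : A ≃* Bᵐᵒᵖ) (h : IsPrimitiveIdempotent (1 : A)) : IsPrimitiveIdempotent (1 : B) := by
  rw [isPrimitiveIdempotent_one_iff] at h ⊢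
  refine ⟨(φ.toEquiv.trans MulOpposite.opEquiv.symm).nontrivial_congr.1 h.1, fun d hd => ?_⟩
  have hd' : IsIdempotentElem (MulOpposite.op d) := congrArg MulOpposite.op hd
  simpa using h.2 (φ.symm (MulOpposite.op d)) (hd'.map φ.symm)

variable {A B : Type*} [Ring A] [Ring B]

lemma exists_isIdempotentElem_of_isCompl {I J : Ideal A} (h : IsCompl I J) :
    ∃ e ∈ I, 1 - e ∈ J ∧ IsIdempotentElem e := by
  obtain ⟨e, he, f, hf, hef⟩ :=
    Submodule.mem_sup.1 (h.sup_eq_top ▸ Submodule.mem_top (x := (1 : A)))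
  obtain rfl : f = 1 - e := eq_sub_of_add_eq' hef
  refine ⟨e, he, hf, ?_⟩
  have hJ : e * (1 - e) ∈ J := J.mul_mem_left e hf
  have hI : e * (1 - e) ∈ I := by
    rw [mul_one_sub]
    exact I.sub_mem he (I.mul_mem_left e he)
  have := Submodule.disjoint_def.1 h.disjoint _ hI hJ
  rw [mul_one_sub, sub_eq_zero] at this
  exact this.symm

lemma exists_fitting_idempotent [IsArtinianRing A] (a : A) :
    ∃ n ≠ 0, ∃ e : A, IsIdempotentElem e ∧ e * a ^ n = 0 ∧ ∃ z, z * a ^ n = 1 - e := by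
  let ρ : Module.End A A := LinearMap.toSpanSingleton A A a
  have hρ (n : ℕ) (x : A) : (ρ ^ n) x = x * a ^ n := by
    induction n generalizing x with
    | zero => simp
    | succ n ih =>
      rw [pow_succ, Module.End.mul_apply, ih, pow_succ', ← mul_assoc]
      rfl
  obtain ⟨n, hn, hn0⟩ :=
    (ρ.eventually_isCompl_ker_pow_range_pow.and (Filter.eventually_ne_atTop 0)).exists
  obtain ⟨e, hker, hrange, he⟩ := exists_isIdempotentElem_of_isCompl hn
  simp only [LinearMap.mem_ker, LinearMap.mem_range, hρ] at hker hrange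
  exact ⟨n, hn0, e, he, hker, hrange⟩

lemma IsPrimitiveIdempotent.isLocalRing [IsArtinianRing A] (h : IsPrimitiveIdempotent (1 : A)) :
    IsLocalRing A := by
  obtain ⟨_, hidem⟩ := isPrimitiveIdempotent_one_iff.1 h
  refine .of_is_unit_or_is_unit_of_add_one fun {a b} hab => ?_
  obtain ⟨n, hn, e, he, hea, z, hz⟩ := exists_fitting_idempotent a
  obtain rfl | rfl := hidem e he
  · left
    rw [sub_zero] at hz
    exact (isUnit_pow_iff hn).1 (IsUnit.of_mul_eq_one_right _ hz)
  · right
    rw [one_mul] at hea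
    rw [eq_sub_of_add_eq' hab]
    exact IsNilpotent.isUnit_one_sub ⟨n, hea⟩

lemma isUnit_or_isUnit_of_isUnit_add [IsLocalRing A] {x y : A} (h : IsUnit (x + y)) :
    IsUnit x ∨ IsUnit y := by
  obtain ⟨u, hu⟩ := h
  have hsum : (↑u⁻¹ : A) * x + ↑u⁻¹ * y = 1 := by rw [← mul_add, ← hu, u.inv_mul]
  simpa using IsLocalRing.isUnit_or_isUnit_of_add_one hsum

lemma exists_isPrimitiveIdempotent_isUnit_map [IsArtinianRing A] [IsLocalRing B] (φ : A →+ B)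
    (hφ : IsUnit (φ 1)) : ∃ e, IsPrimitiveIdempotent e ∧ IsUnit (φ e) := by
  obtain ⟨e, ⟨he, hφe⟩, hmin⟩ := (InvImage.wf (fun e : A => Ideal.span {e})
    wellFounded_lt).has_min {e | IsIdempotentElem e ∧ IsUnit (φ e)} ⟨1, .one, hφ⟩
  have eq_of_isUnit {d : A} (hd : IsIdempotentElem d) (hed : e * d = d) (hde : d * e = d)
      (hφd : IsUnit (φ d)) : d = e := by
    have hle : Ideal.span {d} ≤ Ideal.span {e} :=
      (Ideal.span_singleton_le_iff_mem _).2 (Ideal.mem_span_singleton'.2 ⟨d, hde⟩)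
    have hge : Ideal.span {e} ≤ Ideal.span {d} := not_lt_iff_le_imp_ge.1 (hmin d ⟨hd, hφd⟩) hle
    obtain ⟨x, hx⟩ := Ideal.mem_span_singleton'.1 ((Ideal.span_singleton_le_iff_mem _).1 hge)
    rw [← hed, ← hx, mul_assoc, hd.eq]
  refine ⟨e, ⟨?_, he, fun d hd hed hde => ?_⟩, hφe⟩
  · rintro rfl
    simp at hφe
  · have hsum : IsUnit (φ d + φ (e - d)) := by rwa [← map_add, add_sub_cancel]
    obtain hφd | hφd := isUnit_or_isUnit_of_isUnit_add hsum
    · exact Or.inr (eq_of_isUnit hd hed hde hφd)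
    · left
      have := eq_of_isUnit (hd.sub he hde hed) (by rw [mul_sub, he.eq, hed])
        (by rw [sub_mul, he.eq, hde]) hφd
      exact sub_eq_self.1 this

end Rings

section Categories

variable {D E : Type*} [Category* D] [Category* E] [Preadditive D] [Preadditive E]

lemma exists_iso_biprod_of_idempotent [HasBinaryBiproducts D] [IsIdempotentComplete D] {X : D}
    {e : X ⟶ X} (he : e ≫ e = e) :
    ∃ (Y Z : D) (φ : X ≅ Y ⊞ Z), φ.hom ≫ biprod.fst ≫ biprod.inl ≫ φ.inv = e := by
  obtain ⟨Y, i, p, hip, hpi⟩ := IsIdempotentComplete.idempotents_split X e he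
  obtain ⟨Z, j, q, hjq, hqj⟩ :=
    IsIdempotentComplete.idempotents_split X (𝟙 X - e) (Idempotents.idem_of_id_sub_idem e he)
  have hiq : i ≫ q = 0 := by
    have : i ≫ (𝟙 X - e) = 0 := by simp [← hpi, reassoc_of% hip]
    rw [← hqj] at this
    simpa [hjq] using this =≫ q
  have hjp : j ≫ p = 0 := by
    have : j ≫ e = 0 := by
      rw [← sub_sub_cancel (𝟙 X) e, ← hqj, Preadditive.comp_sub, reassoc_of% hjq,
        Category.comp_id, sub_self]
    rw [← hpi] at this
    simpa [hip] using this =≫ p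
  let φ : X ≅ Y ⊞ Z :=
    { hom := biprod.lift p q
      inv := biprod.desc i j
      hom_inv_id := by rw [biprod.lift_desc, hpi, hqj, add_sub_cancel]
      inv_hom_id := by ext <;> simp [hip, hjq, hiq, hjp] }
  exact ⟨Y, Z, φ, by simp [φ, hpi]⟩

lemma indecomposable_iff_isPrimitiveIdempotent_one [HasBinaryBiproducts D]
    [IsIdempotentComplete D] {X : D} :
    Indecomposable X ↔ IsPrimitiveIdempotent (1 : End X) := by
  rw [isPrimitiveIdempotent_one_iff, Indecomposable]
  refine and_congr ?_ ⟨fun h e he => ?_, fun h Y Z φ => ?_⟩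
  · rw [← not_subsingleton_iff_nontrivial, ← subsingleton_iff_zero_eq_one, IsZero.iff_id_eq_zero,
      eq_comm]
    rfl
  · obtain ⟨Y, Z, φ, rfl⟩ := exists_iso_biprod_of_idempotent he
    rcases h Y Z φ with hY | hZ
    · left
      rw [hY.eq_of_src biprod.inl 0, zero_comp, comp_zero, comp_zero]
    · right
      have : (biprod.fst : Y ⊞ Z ⟶ Y) ≫ biprod.inl = 𝟙 _ := by
        rw [← biprod.total, hZ.eq_of_src biprod.inr 0, comp_zero, add_zero]
      rw [reassoc_of% this, φ.hom_inv_id, End.one_def]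
  · have he : (φ.hom ≫ biprod.fst ≫ biprod.inl ≫ φ.inv) ≫
        φ.hom ≫ biprod.fst ≫ biprod.inl ≫ φ.inv = φ.hom ≫ biprod.fst ≫ biprod.inl ≫ φ.inv := by
      simp
    simp only [IsZero.iff_id_eq_zero]
    refine (h _ he).imp (fun h0 => ?_) (fun h1 => ?_)
    · simpa using congrArg (fun t => biprod.inl ≫ φ.inv ≫ t ≫ φ.hom ≫ biprod.fst) h0
    · simpa using (congrArg (fun t => biprod.inr ≫ φ.inv ≫ t ≫ φ.hom ≫ biprod.snd) h1).symm

lemma isLocalRing_end_of_indecomposable [HasBinaryBiproducts D] [IsIdempotentComplete D] {X : D}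
    [IsArtinianRing (End X)] (hX : Indecomposable X) : IsLocalRing (End X) :=
  (indecomposable_iff_isPrimitiveIdempotent_one.1 hX).isLocalRing

lemma isPrimitiveIdempotent_one_of_retract {X Y : D} (s : Retract Y X)
    (h : IsPrimitiveIdempotent (End.of (s.r ≫ s.i))) : IsPrimitiveIdempotent (1 : End Y) := by
  obtain ⟨hne, -, hmin⟩ := h
  have eq_of_conj_eq {f g : Y ⟶ Y} (h : s.r ≫ f ≫ s.i = s.r ≫ g ≫ s.i) : f = g := by
    simpa using s.i ≫= h =≫ s.r
  refine isPrimitiveIdempotent_one_iff.2 ⟨nontrivial_of_ne 1 0 fun h10 => hne ?_, fun d hd => ?_⟩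
  · have : 𝟙 Y = 0 := h10
    rw [← Category.id_comp s.i, this, zero_comp, comp_zero]
  · have hd : d ≫ d = d := hd
    refine (hmin (s.r ≫ d ≫ s.i) ?_ ?_ ?_).imp (fun h0 => ?_) (fun h1 => ?_)
    · simp [IsIdempotentElem, End.mul_def, reassoc_of% hd]
    · simp [End.mul_def]
    · simp [End.mul_def]
    · exact eq_of_conj_eq (by simpa using h0)
    · exact eq_of_conj_eq (by simpa using h1)

lemma exists_indecomposable_retract [HasBinaryBiproducts D] [IsIdempotentComplete D]
    (T : D ⥤ E) [T.Additive] {G : E} [IsLocalRing (End G)] {X : D} [IsArtinianRing (End X)]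
    (s : Retract G (T.obj X)) :
    ∃ Y, Indecomposable Y ∧ Nonempty (Retract Y X) ∧ Nonempty (Retract G (T.obj Y)) := by
  let φ : End X →+ End G :=
    ((Preadditive.leftComp G s.i).comp (Preadditive.rightComp (T.obj X) s.r)).comp T.mapAddHom
  have hφ : φ 1 = 1 := by
    change s.i ≫ T.map (𝟙 X) ≫ s.r = 𝟙 G
    simp
  obtain ⟨e, he, hφe⟩ := exists_isPrimitiveIdempotent_isUnit_map φ (hφ ▸ isUnit_one)
  obtain ⟨Y, i, p, hip, rfl⟩ := IsIdempotentComplete.idempotents_split X e he.2.1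
  let t : Retract Y X := ⟨i, p, hip⟩
  obtain ⟨v, hv⟩ := hφe.exists_left_inv
  refine ⟨Y, indecomposable_iff_isPrimitiveIdempotent_one.2
    (isPrimitiveIdempotent_one_of_retract t he), ⟨t⟩, ⟨⟨s.i ≫ T.map p, T.map i ≫ s.r ≫ v, ?_⟩⟩⟩
  change (s.i ≫ T.map (p ≫ i) ≫ s.r) ≫ v = 𝟙 G at hv
  simpa using hv

end Categories

section Adjunctions

lemma homEquiv₁_comp {b c d : C} {l : b ⟶ c} {r : c ⟶ b} (adj : Bicategory.Adjunction l r)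
    {x y : b ⟶ d} {z : c ⟶ d} (η : x ⟶ y) (θ : y ⟶ l ≫ z) :
    adj.homEquiv₁ (η ≫ θ) = r ◁ η ≫ adj.homEquiv₁ θ := by
  simp [Bicategory.Adjunction.homEquiv₁_apply]

lemma homEquiv₁_symm_comp {b c d : C} {l : b ⟶ c} {r : c ⟶ b} (adj : Bicategory.Adjunction l r)
    {x : b ⟶ d} {y z : c ⟶ d} (η : r ≫ x ⟶ y) (θ : y ⟶ z) :
    adj.homEquiv₁.symm (η ≫ θ) = adj.homEquiv₁.symm η ≫ l ◁ θ := by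
  simp [Bicategory.Adjunction.homEquiv₁_symm_apply]

/-- The adjunction of functors induced by an adjunction `l ⊣ r` of 1-morphisms, with sides exchanged
because precomposition is contravariant. It makes precomposition with `l` additive. -/
def precompAdjunction {b c : C} {l : b ⟶ c} {r : c ⟶ b} (adj : Bicategory.Adjunction l r) (d : C) :
    precomp d r ⊣ precomp d l :=
  CategoryTheory.Adjunction.mkOfHomEquiv
    { homEquiv _ _ := adj.homEquiv₁.symm
      homEquiv_naturality_left_symm := homEquiv₁_comp adj
      homEquiv_naturality_right := homEquiv₁_symm_comp adj }

lemma precomp_additive [∀ a b : C, Preadditive (a ⟶ b)] [∀ a b : C, HasFiniteBiproducts (a ⟶ b)]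
    {b c : C} (l : b ⟶ c) [IsLeftAdjoint l] (d : C) : (precomp d l).Additive :=
  have := (precompAdjunction (Adjunction.ofIsLeftAdjoint l) d).isRightAdjoint
  (precomp d l).additive_of_preserves_binary_products

/-- Transport of an adjunction along an isomorphism of right adjoints, used to turn the weak
involutivity `f** ≅ f` into an adjunction `f* ⊣ f`. -/
def adjunctionOfIsoRight {a b : C} {l : a ⟶ b} {r r' : b ⟶ a} (adj : Bicategory.Adjunction l r)
    (e : r ≅ r') : Bicategory.Adjunction l r' where
  unit := adj.unit ≫ l ◁ e.hom
  counit := e.inv ▷ l ≫ adj.counit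
  left_triangle := by
    calc
      _ = 𝟙 _ ⊗≫ adj.unit ▷ l ⊗≫ l ◁ (e.hom ≫ e.inv) ▷ l ⊗≫ l ◁ adj.counit ⊗≫ 𝟙 _ := by
        bicategory
      _ = leftZigzag adj.unit adj.counit := by rw [e.hom_inv_id]; bicategory
      _ = (λ_ l).hom ≫ (ρ_ l).inv := adj.left_triangle
  right_triangle := by
    calc
      _ = 𝟙 _ ⊗≫ (r' ◁ (adj.unit ≫ l ◁ e.hom) ≫ e.inv ▷ (l ≫ r')) ⊗≫
            adj.counit ▷ r' ⊗≫ 𝟙 _ := by bicategory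
      _ = 𝟙 _ ⊗≫ e.inv ⊗≫ r ◁ adj.unit ⊗≫ ((r ≫ l) ◁ e.hom ≫ adj.counit ▷ r') ⊗≫ 𝟙 _ := by
        rw [whisker_exchange]; bicategory
      _ = 𝟙 _ ⊗≫ e.inv ⊗≫ rightZigzag adj.unit adj.counit ⊗≫ e.hom ⊗≫ 𝟙 _ := by
        rw [whisker_exchange]; bicategory
      _ = (ρ_ r').hom ≫ (e.inv ≫ e.hom) ≫ (λ_ r').inv := by rw [adj.right_triangle]; bicategory
      _ = (ρ_ r').hom ≫ (λ_ r').inv := by rw [e.inv_hom_id, Category.id_comp]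

/-- Conjugation along an adjunction, as an anti-isomorphism of endomorphism monoids. It transfers
indecomposability between adjoint 1-morphisms. -/
def endMulEquivOfAdjunction {a b : C} {l : a ⟶ b} {r : b ⟶ a} (adj : Bicategory.Adjunction l r) :
    End l ≃* (End r)ᵐᵒᵖ where
  toEquiv := (Bicategory.conjugateEquiv adj adj).trans MulOpposite.opEquiv
  map_mul' η θ := MulOpposite.unop_injective (Bicategory.conjugateEquiv_comp adj adj adj η θ).symm

end Adjunctions

namespace IsSummand

lemma iff_nonempty_retract {a b : C} {f g : a ⟶ b} : IsSummand f g ↔ Nonempty (Retract f g) :=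
  ⟨fun ⟨i, p, hip⟩ => ⟨⟨i, p, hip⟩⟩, fun ⟨s⟩ => ⟨s.i, s.r, s.retract⟩⟩

lemma of_iso {a b : C} {f g : a ⟶ b} (e : f ≅ g) : IsSummand f g :=
  ⟨e.hom, e.inv, e.hom_inv_id⟩

lemma trans {a b : C} {f g h : a ⟶ b} (hfg : IsSummand f g) (hgh : IsSummand g h) :
    IsSummand f h := by
  obtain ⟨i, p, hip⟩ := hfg
  obtain ⟨j, q, hjq⟩ := hgh
  exact ⟨i ≫ j, q ≫ p, by rw [Category.assoc, reassoc_of% hjq, hip]⟩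

lemma whiskerLeft {a b c : C} (h : a ⟶ b) {f g : b ⟶ c} (hfg : IsSummand f g) :
    IsSummand (h ≫ f) (h ≫ g) := by
  obtain ⟨i, p, hip⟩ := hfg
  exact ⟨h ◁ i, h ◁ p, by rw [← Bicategory.whiskerLeft_comp, hip, Bicategory.whiskerLeft_id]⟩

lemma whiskerRight {a b c : C} {f g : a ⟶ b} (hfg : IsSummand f g) (h : b ⟶ c) :
    IsSummand (f ≫ h) (g ≫ h) := by
  obtain ⟨i, p, hip⟩ := hfg
  exact ⟨i ▷ h, p ▷ h, by rw [← Bicategory.comp_whiskerRight, hip, Bicategory.id_whiskerRight]⟩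

lemma left_of_adjunction {a b : C} {l : a ⟶ b} {r : b ⟶ a} (adj : Bicategory.Adjunction l r) :
    IsSummand l (l ≫ r ≫ l) := by
  refine ⟨(λ_ l).inv ≫ adj.unit ▷ l ≫ (α_ l r l).hom, l ◁ adj.counit ≫ (ρ_ l).hom, ?_⟩
  calc
    _ = (λ_ l).inv ≫ leftZigzag adj.unit adj.counit ≫ (ρ_ l).hom := by bicategory
    _ = 𝟙 l := by simp [adj.left_triangle]

lemma right_of_adjunction {a b : C} {l : a ⟶ b} {r : b ⟶ a} (adj : Bicategory.Adjunction l r) :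
    IsSummand r (r ≫ l ≫ r) := by
  refine ⟨(ρ_ r).inv ≫ r ◁ adj.unit, (α_ r l r).inv ≫ adj.counit ▷ r ≫ (λ_ r).hom, ?_⟩
  calc
    _ = (ρ_ r).inv ≫ rightZigzag adj.unit adj.counit ≫ (λ_ r).hom := by bicategory
    _ = 𝟙 r := by simp [adj.right_triangle]

lemma right_iff_left {a b : C} {l₁ l₂ : a ⟶ b} {r₁ r₂ : b ⟶ a}
    (adj₁ : Bicategory.Adjunction l₁ r₁) (adj₂ : Bicategory.Adjunction l₂ r₂) :
    IsSummand r₁ r₂ ↔ IsSummand l₁ l₂ :=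
  ⟨fun ⟨_, _, h⟩ => ⟨_, _, Bicategory.conjugateEquiv_symm_comm adj₁ adj₂ h⟩,
    fun ⟨_, _, h⟩ => ⟨_, _, Bicategory.conjugateEquiv_comm adj₁ adj₂ h⟩⟩

end IsSummand

lemma leLR_trans {F G H : OneMor C} (hFG : leLR F G) (hGH : leLR G H) : leLR F H := by
  obtain ⟨h₁, h₂, hG⟩ := hFG
  obtain ⟨l₁, l₂, hH⟩ := hGH
  refine ⟨l₁ ≫ h₁, h₂ ≫ l₂, hH.trans (((hG.whiskerRight l₂).whiskerLeft l₁).trans (.of_iso ?_))⟩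
  exact whiskerLeftIso l₁ (α_ _ _ _ ≪≫ whiskerLeftIso h₁ (α_ _ _ _)) ≪≫ (α_ _ _ _).symm

lemma leR_refl (F : OneMor C) : leR F F :=
  ⟨rfl, 𝟙 _, .of_iso (ρ_ _).symm⟩

lemma leR.leLR {F G : OneMor C} (h : leR F G) : leLR F G := by
  obtain ⟨a, b, f⟩ := F
  obtain ⟨a', c, g⟩ := G
  obtain ⟨hsrc, x, hx⟩ := h
  obtain rfl : a = a' := hsrc
  exact ⟨𝟙 _, x, hx.trans (.of_iso (λ_ _).symm)⟩

lemma leL.leLR {F G : OneMor C} (h : leL F G) : leLR F G := by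
  obtain ⟨a, b, f⟩ := F
  obtain ⟨c, b', g⟩ := G
  obtain ⟨htgt, x, hx⟩ := h
  obtain rfl : b = b' := htgt
  exact ⟨x, 𝟙 _, hx.trans (.of_iso (whiskerLeftIso x (ρ_ _).symm))⟩

/-- A chosen right adjoint of a 1-morphism, with source and target exchanged. In a fiat category it
is isomorphic to the image under the involution. -/
noncomputable def OneMor.rightAdjoint (F : OneMor C) [IsLeftAdjoint F.mor] : OneMor C :=
  ⟨F.tgt, F.src, Bicategory.rightAdjoint F.mor⟩

lemma leR_rightAdjoint_iff [∀ {a b : C} (f : a ⟶ b), IsLeftAdjoint f]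
    [∀ {a b : C} (f : a ⟶ b), IsRightAdjoint f] {F G : OneMor C} :
    leR F.rightAdjoint G.rightAdjoint ↔ leL F G := by
  obtain ⟨a, b, f⟩ := F
  obtain ⟨c, b', g⟩ := G
  constructor
  · rintro ⟨htgt, (x : a ⟶ c), hx⟩
    obtain rfl : b = b' := htgt
    have adj := (Bicategory.Adjunction.ofIsRightAdjoint x).comp (.ofIsLeftAdjoint f)
    exact ⟨rfl, _, (IsSummand.right_iff_left (.ofIsLeftAdjoint g) adj).1 hx⟩
  · rintro ⟨htgt, x, hx⟩
    obtain rfl : b = b' := htgt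
    have adj := (Bicategory.Adjunction.ofIsLeftAdjoint x).comp (.ofIsLeftAdjoint f)
    exact ⟨rfl, _, (IsSummand.right_iff_left (.ofIsLeftAdjoint g) adj).2 hx⟩

section Cells

variable [∀ a b : C, Preadditive (a ⟶ b)] [∀ a b : C, HasFiniteBiproducts (a ⟶ b)]

lemma indec_iff_indecomposable {a b : C} {f : a ⟶ b} : Indec f ↔ Indecomposable f :=
  and_congr_right fun _ => ⟨fun h Y Z φ => h Y Z ⟨φ⟩, fun h Y Z ⟨φ⟩ => h Y Z φ⟩

namespace IsTwoSidedCell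

variable {Q : Set (OneMor C)} {F G K : OneMor C}

lemma mem_of_leLR (hQ : IsTwoSidedCell Q) (hF : F ∈ Q) (hG : G ∈ Q) (hK : IndecM K)
    (hFK : leLR F K) (hKG : leLR K G) : K ∈ Q := by
  obtain ⟨E, -, rfl⟩ := hQ
  exact ⟨hK, leLR_trans hF.2.1 hFK, leLR_trans hKG hG.2.2⟩

lemma leLR (hQ : IsTwoSidedCell Q) (hF : F ∈ Q) (hG : G ∈ Q) : leLR F G := by
  obtain ⟨E, -, rfl⟩ := hQ
  exact leLR_trans hF.2.2 hG.2.1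

lemma indecM (hQ : IsTwoSidedCell Q) (hF : F ∈ Q) : IndecM F := by
  obtain ⟨E, -, rfl⟩ := hQ
  exact hF.1

end IsTwoSidedCell

lemma IsRegular.simR_of_leR {Q : Set (OneMor C)} (hQ : IsRegular Q) {F G : OneMor C}
    (hF : F ∈ Q) (hG : G ∈ Q) (h : leR F G) : simR F G := by
  let rightCell (E : OneMor C) : Set (OneMor C) := {K | IndecM K ∧ simR E K}
  have hmem {E} (hE : E ∈ Q) : E ∈ rightCell E := ⟨hQ.1.indecM hE, leR_refl E, leR_refl E⟩
  have hcell {E} (hE : E ∈ Q) : IsRightCell (rightCell E) := ⟨E, hQ.1.indecM hE, rfl⟩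
  have hsub {E} (hE : E ∈ Q) : rightCell E ⊆ Q := fun K hK =>
    hQ.1.mem_of_leLR hE hE hK.1 hK.2.1.leLR hK.2.2.leLR
  have heq : rightCell F = rightCell G := by
    by_contra hne
    exact (hQ.2 _ _ (hcell hF) (hcell hG) (hsub hF) (hsub hG) hne).1
      ⟨F, hmem hF, G, hmem hG, h⟩
  exact (heq ▸ hmem hG : G ∈ rightCell F).2

variable [∀ a b : C, IsIdempotentComplete (a ⟶ b)]

lemma Indec.right_of_adjunction {a b : C} {l : a ⟶ b} {r : b ⟶ a}
    (adj : Bicategory.Adjunction l r) (hl : Indec l) : Indec r := by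
  rw [indec_iff_indecomposable, indecomposable_iff_isPrimitiveIdempotent_one] at hl ⊢
  exact .one_of_mulEquiv_op (endMulEquivOfAdjunction adj) hl

lemma exists_indec_isSummand_comp {a b c : C} {g : a ⟶ c} [IsArtinianRing (End g)]
    (hg : Indec g) (h : a ⟶ b) [IsLeftAdjoint h] {x : b ⟶ c} [IsArtinianRing (End x)]
    (hgx : IsSummand g (h ≫ x)) :
    ∃ y : b ⟶ c, Indec y ∧ IsSummand y x ∧ IsSummand g (h ≫ y) := by
  simp only [indec_iff_indecomposable, IsSummand.iff_nonempty_retract] at hg hgx ⊢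
  have := isLocalRing_end_of_indecomposable hg
  have := precomp_additive h c
  exact exists_indecomposable_retract (precomp c h) hgx.some

variable [∀ {a b : C} (f : a ⟶ b), IsLeftAdjoint f]

lemma IsTwoSidedCell.rightAdjoint_mem {Q : Set (OneMor C)} (hQ : IsTwoSidedCell Q) {F : OneMor C}
    (hF : F ∈ Q) : F.rightAdjoint ∈ Q :=
  have adj := Bicategory.Adjunction.ofIsLeftAdjoint F.mor
  hQ.mem_of_leLR hF hF (Indec.right_of_adjunction adj (hQ.indecM hF))
    ⟨_, _, .right_of_adjunction adj⟩ ⟨_, _, .left_of_adjunction adj⟩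

variable [∀ {a b : C} (f : a ⟶ b), IsRightAdjoint f]

lemma IsRegular.simL_of_leL {Q : Set (OneMor C)} (hQ : IsRegular Q) {F G : OneMor C}
    (hF : F ∈ Q) (hG : G ∈ Q) (h : leL F G) : simL F G :=
  have hsim : simR F.rightAdjoint G.rightAdjoint :=
    hQ.simR_of_leR (hQ.1.rightAdjoint_mem hF) (hQ.1.rightAdjoint_mem hG)
      (leR_rightAdjoint_iff.2 h)
  ⟨h, leR_rightAdjoint_iff.1 hsim.2⟩

lemma IsRegular.exists_simR_simL [∀ {a b : C} (f : a ⟶ b), IsArtinianRing (End f)]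
    {Q : Set (OneMor C)} (hQ : IsRegular Q) {F G : OneMor C} (hF : F ∈ Q) (hG : G ∈ Q) :
    ∃ K ∈ Q, simR F K ∧ simL K G := by
  obtain ⟨h₁, h₂, hFG⟩ := hQ.1.leLR hF hG
  obtain ⟨y, hy, hyF, hGy⟩ := exists_indec_isSummand_comp (hQ.1.indecM hG) h₁ hFG
  let K : OneMor C := ⟨F.src, G.tgt, y⟩
  have hFK : leR F K := ⟨rfl, h₂, hyF⟩
  have hKG : leL K G := ⟨rfl, h₁, hGy⟩
  have hK : K ∈ Q := hQ.1.mem_of_leLR hF hG hy hFK.leLR hKG.leLR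
  exact ⟨K, hK, hQ.simR_of_leR hF hK hFK, hQ.simL_of_leL hK hG hKG⟩

end Cells

theorem regular_cell_full_relation_general
    [∀ a b : C, Preadditive (a ⟶ b)] [∀ a b : C, HasFiniteBiproducts (a ⟶ b)]
    (hidem : ∀ a b : C, IsIdempotentComplete (a ⟶ b))
    (hartin : ∀ {a b : C} (f : a ⟶ b), IsArtinianRing (End f))
    (hleft : ∀ {a b : C} (f : a ⟶ b), IsLeftAdjoint f)
    (hright : ∀ {a b : C} (f : a ⟶ b), IsRightAdjoint f)
    {Q : Set (OneMor C)} (hQ : IsRegular Q) {F G : OneMor C} (hF : F ∈ Q) (hG : G ∈ Q) :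
    (∃ H ∈ Q, simL F H ∧ simR H G) ∧ (∃ K ∈ Q, simR F K ∧ simL K G) := by
  refine ⟨?_, hQ.exists_simR_simL hF hG⟩
  obtain ⟨H, hH, hGH, hHF⟩ := hQ.exists_simR_simL hG hF
  exact ⟨H, hH, hHF.symm, hGH.symm⟩

namespace FiatAxioms

variable {k : Type*} [Field k] [IsAlgClosed k] [Bicategory.Strict C]
  [∀ a b : C, Preadditive (a ⟶ b)] [∀ a b : C, HasFiniteBiproducts (a ⟶ b)]
  [∀ a b : C, Linear k (a ⟶ b)]

lemma isArtinianRing_end (S : FiatAxioms k C) {a b : C} (f : a ⟶ b) : IsArtinianRing (End f) :=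
  have : FiniteDimensional k (End f) := S.finDim a b f f
  .of_finite k (End f)

lemma isLeftAdjoint (S : FiatAxioms k C) {a b : C} (f : a ⟶ b) : IsLeftAdjoint f :=
  .mk (S.adj f).some

lemma isRightAdjoint (S : FiatAxioms k C) {a b : C} (f : a ⟶ b) : IsRightAdjoint f :=
  .mk (adjunctionOfIsoRight (S.adj (S.star f)).some (S.starStar f).some)

end FiatAxioms

/-- Let `Q` be a regular two-sided cell and `F, G ∈ Q`. Then there is
`H ∈ Q` with `F ∼_L H` and `H ∼_R G`, and there is `K ∈ Q` with `F ∼_R K` and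
`K ∼_L G`; i.e. on `Q` the full relation equals the composite of `∼_R` and `∼_L`
taken in either order. -/
theorem regular_cell_full_relation
    (k : Type*) [Field k] [IsAlgClosed k]
    {C : Type u} [Bicategory.{w, v} C] [Bicategory.Strict C]
    [∀ a b : C, Preadditive (a ⟶ b)] [∀ a b : C, HasFiniteBiproducts (a ⟶ b)]
    [∀ a b : C, Linear k (a ⟶ b)]
    (S : FiatAxioms k C)
    (Q : Set (OneMor C)) (hQ : IsRegular Q)
    (F G : OneMor C) (hF : F ∈ Q) (hG : G ∈ Q) :
    (∃ H ∈ Q, simL F H ∧ simR H G) ∧ (∃ K ∈ Q, simR F K ∧ simL K G) :=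
  regular_cell_full_relation_general S.idemComplete S.isArtinianRing_end S.isLeftAdjoint
    S.isRightAdjoint hQ hF hG

end CellTwoRep
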